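/- In the hypercube-center graph G_S, a left-half center X_{x_1,x_2,x_3} and an edge center E_{v_i,v_j,v_k} are adjacent if and only if v_ℓ = x_ℓ for every ℓ ∈ {1,2,3} ∩ {i,j,k}. -/

import Mathlib

open scoped Classical

/-- A vertex of the 6-partite 3-uniform hypergraph: a part `ℓ ∈ Fin 6` together with a
value in `[n]` (represented by `Fin n`). -/
abbrev HypVert (n : ℕ) := Fin 6 × Fin n

/-- The value `v/(n+1)` associated to a vertex value `v ∈ [n]` (here `v : Fin n` represents
the value `v+1 ∈ [n]`). -/
noncomputable def hval (n : ℕ) (v : Fin n) : ℝ := ((v : ℕ) + 1) / ((n : ℝ) + 1)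

/-- The set of parts met by a set of hypergraph vertices. -/
def hparts {n : ℕ} (e : Finset (HypVert n)) : Finset (Fin 6) := e.image Prod.fst

/-- The hyperedge set is well-formed: every hyperedge consists of `3` vertices lying in
three pairwise distinct parts. -/
def WellFormed {n : ℕ} (E : Set (Finset (HypVert n))) : Prop :=
  ∀ e ∈ E, e.card = 3 ∧ (hparts e).card = 3

/-- The vertex triple `{(1, x₁), (2, x₂), (3, x₃)}` (parts `1,2,3`, `0`-based `0,1,2`). -/
def tripleL {n : ℕ} (x : Fin 3 → Fin n) : Finset (HypVert n) :=
  Finset.univ.image fun ℓ : Fin 3 => ((⟨(ℓ : ℕ), by have := ℓ.isLt; omega⟩ : Fin 6), x ℓ)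

/-- The vertex triple `{(4, y₄), (5, y₅), (6, y₆)}` (parts `4,5,6`, `0`-based `3,4,5`). -/
def tripleR {n : ℕ} (y : Fin 3 → Fin n) : Finset (HypVert n) :=
  Finset.univ.image fun ℓ : Fin 3 => ((⟨(ℓ : ℕ) + 3, by have := ℓ.isLt; omega⟩ : Fin 6), y ℓ)

/-- The left-half center `X x`: in the coordinate pair of part `ℓ ∈ {1,2,3}` it equals
`(x_ℓ/(n+1), 1 − x_ℓ/(n+1))`, and it equals `(2,2)` in the coordinate pairs of parts
`4,5,6`.  (The `12` coordinates are indexed by `Fin 6 × Fin 2`: a part and a position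
within its coordinate pair.) -/
noncomputable def Xpt (n : ℕ) (x : Fin 3 → Fin n) : Fin 6 × Fin 2 → ℝ := fun p =>
  if h : (p.1 : ℕ) < 3 then
    (if p.2 = 0 then hval n (x ⟨(p.1 : ℕ), h⟩) else 1 - hval n (x ⟨(p.1 : ℕ), h⟩))
  else 2

/-- The right-half center `Y y`: `(2,2)` in the coordinate pairs of parts `1,2,3` and
`(y_ℓ/(n+1), 1 − y_ℓ/(n+1))` in the coordinate pair of part `ℓ ∈ {4,5,6}`. -/
noncomputable def Ypt (n : ℕ) (y : Fin 3 → Fin n) : Fin 6 × Fin 2 → ℝ := fun p =>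
  if h : 3 ≤ (p.1 : ℕ) then
    (if p.2 = 0 then hval n (y ⟨(p.1 : ℕ) - 3, by have := p.1.isLt; omega⟩)
     else 1 - hval n (y ⟨(p.1 : ℕ) - 3, by have := p.1.isLt; omega⟩))
  else 2

/-- The edge center of a hyperedge `e`: in the coordinate pair of a part `ℓ` met by `e`
(with vertex value `v`) it equals `(1 + v/(n+1), 2 − v/(n+1))`, and it equals `(1,1)` in the
coordinate pairs of all other parts. -/
noncomputable def Ept (n : ℕ) (e : Finset (HypVert n)) : Fin 6 × Fin 2 → ℝ := fun p =>
  if (∃ v : Fin n, (p.1, v) ∈ e) then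
    (if p.2 = 0 then 1 + ∑ v : Fin n, (if (p.1, v) ∈ e then hval n v else 0)
     else 2 - ∑ v : Fin n, (if (p.1, v) ∈ e then hval n v else 0))
  else 1

/-- Vertices of the hypercube-center graph `G_S`: left-half centers for non-hyperedge
triples from `V₁ × V₂ × V₃`, right-half centers for non-hyperedge triples from
`V₄ × V₅ × V₆`, and edge centers for hyperedges whose parts lie neither all in `{1,2,3}`
nor all in `{4,5,6}`. -/
inductive GSVert (n : ℕ) (E : Set (Finset (HypVert n))) : Type where
  | left (x : Fin 3 → Fin n) (h : tripleL x ∉ E)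
  | right (y : Fin 3 → Fin n) (h : tripleR y ∉ E)
  | edge (e : Finset (HypVert n)) (he : e ∈ E)
      (h1 : ¬ hparts e ⊆ ({0, 1, 2} : Finset (Fin 6)))
      (h2 : ¬ hparts e ⊆ ({3, 4, 5} : Finset (Fin 6)))

/-- The center in `ℝ^12` associated to each vertex of `G_S`. -/
noncomputable def gsPos {n : ℕ} {E : Set (Finset (HypVert n))} :
    GSVert n E → (Fin 6 × Fin 2 → ℝ)
  | .left x _ => Xpt n x
  | .right y _ => Ypt n y
  | .edge e _ _ _ => Ept n e

/-- The hypercube-center graph `G_S`: two distinct centers are adjacent iff their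
`ℓ∞`-distance is at most `1` (the distance on `Fin 6 × Fin 2 → ℝ` is the sup-metric), i.e.
iff the closed axis-parallel unit hypercubes around them intersect. -/
noncomputable def gsGraph (n : ℕ) (E : Set (Finset (HypVert n))) :
    SimpleGraph (GSVert n E) :=
  SimpleGraph.fromRel fun u v => dist (gsPos u) (gsPos v) ≤ 1

theorem hval_pos {n : ℕ} (v : Fin n) : 0 < hval n v := by
  unfold hval
  positivity

theorem hval_lt_one {n : ℕ} (v : Fin n) : hval n v < 1 := by
  have hv : ((v : ℕ) : ℝ) < n := by exact_mod_cast v.isLt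
  rw [hval, div_lt_one (by positivity)]
  linarith

theorem hval_injective (n : ℕ) : Function.Injective (hval n) := by
  intro v w h
  have hn : (n : ℝ) + 1 ≠ 0 := by positivity
  rw [hval, hval, div_left_inj' hn] at h
  exact Fin.ext (by exact_mod_cast add_right_cancel h)

/-- A hyperedge of a well-formed hypergraph has at most one vertex in each part. -/
theorem WellFormed.eq_of_mem {n : ℕ} {E : Set (Finset (HypVert n))} (hE : WellFormed E)
    {e : Finset (HypVert n)} (he : e ∈ E) {p : Fin 6} {v w : Fin n}
    (hv : (p, v) ∈ e) (hw : (p, w) ∈ e) : v = w := by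
  have hinj : Set.InjOn Prod.fst (e : Set (HypVert n)) :=
    Finset.card_image_iff.mp ((hE e he).2.trans (hE e he).1.symm)
  exact congrArg Prod.snd (hinj hv hw rfl)

theorem Ept_of_mem {n : ℕ} {E : Set (Finset (HypVert n))} (hE : WellFormed E)
    {e : Finset (HypVert n)} (he : e ∈ E) {p : Fin 6} {v : Fin n} (hv : (p, v) ∈ e)
    (i : Fin 2) : Ept n e (p, i) = if i = 0 then 1 + hval n v else 2 - hval n v := by
  have hsum : (∑ w : Fin n, if (p, w) ∈ e then hval n w else 0) = hval n v := by
    rw [Finset.sum_eq_single v (fun w _ hw => if_neg fun h => hw (hE.eq_of_mem he h hv))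
      (fun h => absurd (Finset.mem_univ v) h), if_pos hv]
  simp only [Ept, hsum]
  exact if_pos ⟨v, hv⟩

theorem Ept_of_forall_notMem {n : ℕ} {e : Finset (HypVert n)} {p : Fin 6}
    (h : ∀ v, (p, v) ∉ e) (i : Fin 2) : Ept n e (p, i) = 1 :=
  if_neg fun ⟨v, hv⟩ => h v hv

theorem gsGraph_adj_left_edge_iff {n : ℕ} {E : Set (Finset (HypVert n))}
    {x : Fin 3 → Fin n} {hx : tripleL x ∉ E} {e : Finset (HypVert n)} {he : e ∈ E}
    {h1 : ¬ hparts e ⊆ ({0, 1, 2} : Finset (Fin 6))}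
    {h2 : ¬ hparts e ⊆ ({3, 4, 5} : Finset (Fin 6))} :
    (gsGraph n E).Adj (GSVert.left x hx) (GSVert.edge e he h1 h2) ↔
      ∀ p i, |Xpt n x (p, i) - Ept n e (p, i)| ≤ 1 := by
  have hne : GSVert.left x hx ≠ GSVert.edge e he h1 h2 := by simp
  rw [gsGraph, SimpleGraph.fromRel_adj, dist_comm (gsPos (GSVert.edge e he h1 h2)), or_self,
    and_iff_right hne, dist_pi_le_iff zero_le_one, Prod.forall]
  rfl

/-- In `G_S`, a left-half center `X (x₁,x₂,x₃)` and an edge center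
`E (v_i,v_j,v_k)` are adjacent iff `v_ℓ = x_ℓ` for every part `ℓ ∈ {1,2,3}` met by the
hyperedge. -/
theorem gsGraph_equality_check (n : ℕ) (hn : 1 ≤ n) (E : Set (Finset (HypVert n)))
    (hE : WellFormed E)
    (x : Fin 3 → Fin n) (hx : tripleL x ∉ E)
    (e : Finset (HypVert n)) (he : e ∈ E)
    (h1 : ¬ hparts e ⊆ ({0, 1, 2} : Finset (Fin 6)))
    (h2 : ¬ hparts e ⊆ ({3, 4, 5} : Finset (Fin 6))) :
    (gsGraph n E).Adj (GSVert.left x hx) (GSVert.edge e he h1 h2) ↔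
      ∀ (ℓ : Fin 3) (v : Fin n),
        ((⟨(ℓ : ℕ), by have := ℓ.isLt; omega⟩ : Fin 6), v) ∈ e → v = x ℓ := by
  rw [gsGraph_adj_left_edge_iff]
  constructor
  · intro h ℓ v hv
    have hfst := h ⟨ℓ, by omega⟩ 0
    have hsnd := h ⟨ℓ, by omega⟩ 1
    rw [Ept_of_mem hE he hv] at hfst hsnd
    simp only [Xpt, ℓ.isLt, dite_true, if_true, one_ne_zero, if_false, abs_le] at hfst hsnd
    exact hval_injective n (by linarith)
  · intro h p i
    by_cases hp : ∃ v, (p, v) ∈ e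
    · obtain ⟨v, hv⟩ := hp
      have hpos := hval_pos v
      have hlt := hval_lt_one v
      rw [Ept_of_mem hE he hv, abs_le]
      by_cases hp3 : (p : ℕ) < 3
      · obtain rfl := h ⟨p, hp3⟩ v hv
        simp only [Xpt, hp3, dite_true]
        split_ifs <;> constructor <;> linarith
      · simp only [Xpt, hp3, dite_false]
        split_ifs <;> constructor <;> linarith
    · rw [Ept_of_forall_notMem (not_exists.mp hp), abs_le]
      by_cases hp3 : (p : ℕ) < 3
      · have hpos := hval_pos (x ⟨p, hp3⟩)
        have hlt := hval_lt_one (x ⟨p, hp3⟩)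
        simp only [Xpt, hp3, dite_true]
        split_ifs <;> constructor <;> linarith
      · simp only [Xpt, hp3, dite_false]
        constructor <;> norm_num
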